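/- Let l_1,…,l_n and r_1,…,r_n be d-dimensional bit vectors and let ℓ ≥ 1, p ∈ {0,1}, q ≥ 0 be integers, and let G = G_{L,R,ℓ,p,q}. For every 1 ≤ i ≤ n, dist_G(u_i^L, y^L) = 3ℓ − 2p and dist_G(u_i^R, y^R) = 3ℓ − 2p. -/

import Mathlib

namespace GraphOV

/-- Two bit vectors (functions into `Fin 2`) are orthogonal if in every coordinate
at least one of them is `0`. -/
def Orth {d : ℕ} (a b : Fin d → Fin 2) : Prop := ∀ k, a k = 0 ∨ b k = 0

/-- A system of internally disjoint paths joining exterior vertices from `E`: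
for each path name `i : ι` we record its two endpoints and its length. -/
structure PathSys (E : Type) (ι : Type) where
  src : ι → E
  dst : ι → E
  len : ι → ℕ

namespace PathSys

variable {E ι : Type}

/-- Endpoints of zero-length paths get identified. -/
def idRel (S : PathSys E ι) (a b : E) : Prop :=
  ∃ i, S.len i = 0 ∧ S.src i = a ∧ S.dst i = b

/-- Vertices of the glued graph: exterior vertices (up to identification) together
with, for each path of length `m`, fresh interior vertices at positions `1,…,m-1`. -/
def Vert (S : PathSys E ι) : Type :=
  Quot S.idRel ⊕ Σ i : ι, {t : ℕ // 0 < t ∧ t < S.len i}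

/-- The vertex corresponding to an exterior vertex. -/
def ext (S : PathSys E ι) (a : E) : S.Vert := Sum.inl (Quot.mk _ a)

/-- The `t`-th vertex on the path named `i` (for `0 ≤ t ≤ S.len i`). -/
def pt (S : PathSys E ι) (i : ι) (t : ℕ) : S.Vert :=
  if h : 0 < t ∧ t < S.len i then Sum.inr ⟨i, t, h⟩
  else if t = 0 then S.ext (S.src i) else S.ext (S.dst i)

/-- The glued graph: consecutive vertices on each path are adjacent. -/
def graph (S : PathSys E ι) : SimpleGraph S.Vert :=
  SimpleGraph.fromRel fun a b =>
    ∃ i t, t + 1 ≤ S.len i ∧ a = S.pt i t ∧ b = S.pt i (t + 1)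

/-- The set of vertices lying on the path named `i`. -/
def onPath (S : PathSys E ι) (i : ι) : Set S.Vert :=
  {v | ∃ t ≤ S.len i, v = S.pt i t}

/-- A walk in the glued graph contains the path named `i` entirely if all vertices of
that path occur consecutively (in forward or backward order) on the walk. -/
def WalkContainsPath (S : PathSys E ι) {x y : S.Vert} (W : S.graph.Walk x y) (i : ι) : Prop :=
  ∃ a, a + S.len i ≤ W.length ∧
    ((∀ t ≤ S.len i, W.getVert (a + t) = S.pt i t) ∨
     (∀ t ≤ S.len i, W.getVert (a + t) = S.pt i (S.len i - t)))

end PathSys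

/-- The exterior vertices of the graph `G_{L,R,ℓ,p,q}`. -/
inductive Ext (n d : ℕ) : Type
  | uL : Fin n → Ext n d
  | uR : Fin n → Ext n d
  | vL : Fin n → Ext n d
  | vR : Fin n → Ext n d
  | wL : Fin d → Ext n d
  | wR : Fin d → Ext n d
  | xL : Ext n d
  | xR : Ext n d
  | yL : Ext n d
  | yR : Ext n d

/-- Names for the paths of the graph `G_{L,R,ℓ,p,q}`. -/
inductive Idx (n d : ℕ) (l r : Fin n → Fin d → Fin 2) : Type
  | uvL : Fin n → Idx n d l r
  | uvR : Fin n → Idx n d l r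
  | vxL : Fin n → Idx n d l r
  | vxR : Fin n → Idx n d l r
  | vwL : (i : Fin n) → (k : Fin d) → l i k = 1 → Idx n d l r
  | vwR : (j : Fin n) → (k : Fin d) → r j k = 1 → Idx n d l r
  | ywL : Fin d → Idx n d l r
  | ywR : Fin d → Idx n d l r
  | ww : Fin d → Idx n d l r
  | xyL : Idx n d l r
  | xyR : Idx n d l r
  | yy : Idx n d l r

/-- The path system defining the graph `G_{L,R,ℓ,p,q}`. -/
def sys (n d : ℕ) (l r : Fin n → Fin d → Fin 2) (ℓ p q : ℕ) :
    PathSys (Ext n d) (Idx n d l r) where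
  src := fun i => match i with
    | .uvL i => .uL i
    | .uvR i => .uR i
    | .vxL i => .vL i
    | .vxR i => .vR i
    | .vwL i _ _ => .vL i
    | .vwR j _ _ => .vR j
    | .ywL _ => .yL
    | .ywR _ => .yR
    | .ww k => .wL k
    | .xyL => .xL
    | .xyR => .xR
    | .yy => .yL
  dst := fun i => match i with
    | .uvL i => .vL i
    | .uvR i => .vR i
    | .vxL _ => .xL
    | .vxR _ => .xR
    | .vwL _ k _ => .wL k
    | .vwR _ k _ => .wR k
    | .ywL k => .wL k
    | .ywR k => .wR k
    | .ww k => .wR k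
    | .xyL => .yL
    | .xyR => .yR
    | .yy => .yR
  len := fun i => match i with
    | .uvL _ => ℓ - p
    | .uvR _ => ℓ - p
    | .vxL _ => ℓ
    | .vxR _ => ℓ
    | .vwL _ _ _ => ℓ
    | .vwR _ _ _ => ℓ
    | .ywL _ => ℓ
    | .ywR _ => ℓ
    | .ww _ => q
    | .xyL => ℓ - p
    | .xyR => ℓ - p
    | .yy => p + q

/-- The set `P_i^L`. -/
def PL (n d : ℕ) (l r : Fin n → Fin d → Fin 2) (ℓ p q : ℕ) (i : Fin n) :
    Set (sys n d l r ℓ p q).Vert :=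
  (sys n d l r ℓ p q).onPath (.uvL i) ∪
    ((sys n d l r ℓ p q).onPath (.vxL i) \ {(sys n d l r ℓ p q).ext .xL}) ∪
    ⋃ (k : Fin d) (h : l i k = 1),
      ((sys n d l r ℓ p q).onPath (.vwL i k h) \ {(sys n d l r ℓ p q).ext (.wL k)})

/-- The set `P_j^R`. -/
def PR (n d : ℕ) (l r : Fin n → Fin d → Fin 2) (ℓ p q : ℕ) (j : Fin n) :
    Set (sys n d l r ℓ p q).Vert :=
  (sys n d l r ℓ p q).onPath (.uvR j) ∪
    ((sys n d l r ℓ p q).onPath (.vxR j) \ {(sys n d l r ℓ p q).ext .xR}) ∪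
    ⋃ (k : Fin d) (h : r j k = 1),
      ((sys n d l r ℓ p q).onPath (.vwR j k h) \ {(sys n d l r ℓ p q).ext (.wR k)})

/-- The set `V^L`. -/
def VL (n d : ℕ) (l r : Fin n → Fin d → Fin 2) (ℓ p q : ℕ) :
    Set (sys n d l r ℓ p q).Vert := ⋃ i : Fin n, PL n d l r ℓ p q i

/-- The set `V^R`. -/
def VR (n d : ℕ) (l r : Fin n → Fin d → Fin 2) (ℓ p q : ℕ) :
    Set (sys n d l r ℓ p q).Vert := ⋃ j : Fin n, PR n d l r ℓ p q j

/-- The set `V^M` of all remaining vertices. -/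
def VM (n d : ℕ) (l r : Fin n → Fin d → Fin 2) (ℓ p q : ℕ) :
    Set (sys n d l r ℓ p q).Vert := (VL n d l r ℓ p q ∪ VR n d l r ℓ p q)ᶜ

namespace PathSys

variable {E ι : Type}

theorem pt_zero' (S : PathSys E ι) (i : ι) : S.pt i 0 = S.ext (S.src i) := by
  simp [pt]

theorem pt_len' (S : PathSys E ι) (i : ι) : S.pt i (S.len i) = S.ext (S.dst i) := by
  by_cases h : S.len i = 0
  · rw [h, pt_zero']
    exact congrArg Sum.inl (Quot.sound ⟨i, h, rfl, rfl⟩)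
  · simp [pt, h]

theorem exists_walk_pt (S : PathSys E ι) (i : ι) (t : ℕ) (ht : t ≤ S.len i) :
    ∃ W : S.graph.Walk (S.pt i 0) (S.pt i t), W.length ≤ t := by
  induction t with
  | zero => exact ⟨.nil, le_rfl⟩
  | succ t ih =>
    obtain ⟨W, hW⟩ := ih (by omega)
    by_cases h : S.pt i t = S.pt i (t + 1)
    · rw [← h]
      exact ⟨W, by omega⟩
    · have ha : S.graph.Adj (S.pt i t) (S.pt i (t + 1)) := by
        rw [graph, SimpleGraph.fromRel_adj]
        exact ⟨h, Or.inl ⟨i, t, ht, rfl, rfl⟩⟩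
      exact ⟨W.concat ha, by rw [SimpleGraph.Walk.length_concat]; omega⟩

theorem exists_walk_ext (S : PathSys E ι) (i : ι) :
    ∃ W : S.graph.Walk (S.ext (S.src i)) (S.ext (S.dst i)), W.length ≤ S.len i := by
  have := S.exists_walk_pt i (S.len i) le_rfl
  rwa [pt_zero', pt_len'] at this

/-- Extension of a potential on exterior vertices to the whole graph. -/
def pot (S : PathSys E ι) (h : E → ℕ)
    (h1 : ∀ i, h (S.src i) ≤ h (S.dst i) + S.len i)
    (h2 : ∀ i, h (S.dst i) ≤ h (S.src i) + S.len i) : S.Vert → ℕ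
  | Sum.inl a => Quot.lift h (by
      rintro a b ⟨i, hi, rfl, rfl⟩
      have := h1 i
      have := h2 i
      omega) a
  | Sum.inr ⟨i, t, _⟩ => min (h (S.src i) + t) (h (S.dst i) + (S.len i - t))

theorem pot_pt (S : PathSys E ι) (h : E → ℕ)
    (h1 : ∀ i, h (S.src i) ≤ h (S.dst i) + S.len i)
    (h2 : ∀ i, h (S.dst i) ≤ h (S.src i) + S.len i) (i : ι) (t : ℕ) (ht : t ≤ S.len i) :
    S.pot h h1 h2 (S.pt i t) = min (h (S.src i) + t) (h (S.dst i) + (S.len i - t)) := by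
  have a := h1 i
  have b := h2 i
  by_cases c : 0 < t ∧ t < S.len i
  · have : S.pt i t = Sum.inr ⟨i, t, c⟩ := by unfold pt; exact dif_pos c
    rw [this]
    rfl
  · by_cases e : t = 0
    · subst e
      rw [pt_zero']
      change h (S.src i) = _
      omega
    · have : t = S.len i := by omega
      subst this
      rw [pt_len']
      change h (S.dst i) = _
      omega

theorem pot_walk (S : PathSys E ι) (h : E → ℕ)
    (h1 : ∀ i, h (S.src i) ≤ h (S.dst i) + S.len i)
    (h2 : ∀ i, h (S.dst i) ≤ h (S.src i) + S.len i) {x y : S.Vert} (W : S.graph.Walk x y) :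
    S.pot h h1 h2 x ≤ S.pot h h1 h2 y + W.length := by
  induction W with
  | nil => simp
  | cons ha W ih =>
    rw [SimpleGraph.Walk.length_cons]
    rw [graph, SimpleGraph.fromRel_adj] at ha
    obtain ⟨-, ⟨i, t, ht, e1, e2⟩ | ⟨i, t, ht, e1, e2⟩⟩ := ha <;>
    · have p1 := S.pot_pt h h1 h2 i t (by omega)
      have p2 := S.pot_pt h h1 h2 i (t + 1) ht
      rw [← e1] at p1
      rw [← e2] at p2
      omega

theorem dist_eq_of (S : PathSys E ι) (h : E → ℕ)
    (h1 : ∀ i, h (S.src i) ≤ h (S.dst i) + S.len i)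
    (h2 : ∀ i, h (S.dst i) ≤ h (S.src i) + S.len i) (i j k : ι)
    (e1 : S.dst i = S.src j) (e2 : S.dst j = S.src k)
    (hs : h (S.src i) = h (S.dst k) + (S.len i + S.len j + S.len k)) :
    S.graph.dist (S.ext (S.src i)) (S.ext (S.dst k)) = S.len i + S.len j + S.len k := by
  obtain ⟨A, hA⟩ := S.exists_walk_ext i
  have hB' := S.exists_walk_ext j
  have hC' := S.exists_walk_ext k
  rw [← e1] at hB'
  rw [← e2] at hC'
  obtain ⟨B, hB⟩ := hB'
  obtain ⟨C, hC⟩ := hC'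
  apply le_antisymm
  · refine (SimpleGraph.dist_le (A.append (B.append C))).trans ?_
    rw [SimpleGraph.Walk.length_append, SimpleGraph.Walk.length_append]
    omega
  · obtain ⟨W, hW⟩ := (A.append (B.append C)).reachable.exists_walk_length_eq_dist
    have := S.pot_walk h h1 h2 W
    change h (S.src i) ≤ h (S.dst k) + W.length at this
    omega

end PathSys

/-- The potential: (a lower bound for) the distance to the nearer of the two `y`s. -/
def hpot (n d ℓ p : ℕ) : Ext n d → ℕ
  | .uL _ => 3 * ℓ - 2 * p
  | .uR _ => 3 * ℓ - 2 * p
  | .vL _ => 2 * ℓ - p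
  | .vR _ => 2 * ℓ - p
  | .wL _ => ℓ - p
  | .wR _ => ℓ - p
  | .xL => ℓ - p
  | .xR => ℓ - p
  | .yL => 0
  | .yR => 0

theorem dist_u_to_y (n d ℓ p q : ℕ) (hn : 1 ≤ n) (hd : 1 ≤ d) (hℓ : 1 ≤ ℓ)
    (hp : p ≤ 1) (l r : Fin n → Fin d → Fin 2) :
    ∀ i : Fin n,
      (sys n d l r ℓ p q).graph.dist ((sys n d l r ℓ p q).ext (.uL i))
        ((sys n d l r ℓ p q).ext .yL) = 3 * ℓ - 2 * p ∧
      (sys n d l r ℓ p q).graph.dist ((sys n d l r ℓ p q).ext (.uR i))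
        ((sys n d l r ℓ p q).ext .yR) = 3 * ℓ - 2 * p := by
  have h1 : ∀ i, hpot n d ℓ p ((sys n d l r ℓ p q).src i) ≤
      hpot n d ℓ p ((sys n d l r ℓ p q).dst i) + (sys n d l r ℓ p q).len i := by
    intro i
    cases i <;> simp only [sys, hpot] <;> omega
  have h2 : ∀ i, hpot n d ℓ p ((sys n d l r ℓ p q).dst i) ≤
      hpot n d ℓ p ((sys n d l r ℓ p q).src i) + (sys n d l r ℓ p q).len i := by
    intro i
    cases i <;> simp only [sys, hpot] <;> omega
  intro i
  have e : 3 * ℓ - 2 * p = (ℓ - p) + ℓ + (ℓ - p) := by omega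
  constructor
  · rw [e]
    exact (sys n d l r ℓ p q).dist_eq_of _ h1 h2 (.uvL i) (.vxL i) .xyL rfl rfl
      (by simp only [sys, hpot]; omega)
  · rw [e]
    exact (sys n d l r ℓ p q).dist_eq_of _ h1 h2 (.uvR i) (.vxR i) .xyR rfl rfl
      (by simp only [sys, hpot]; omega)

end GraphOV
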